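/- arXiv:2501.10552 — 2 statements merged into one kernel-verified Lean document; each statement's English description precedes it below -/
import Mathlib

section
/- Let E be a quantum channel on M_d(ℂ) and L := E − id. Then the one-parameter semigroup exp(tL) converges as t → ∞: there exists a linear map P on M_d(ℂ) with exp(tL) → P as t → ∞. Moreover P ∘ P = P, P ∘ L = L ∘ P = 0, and the convergence is exponentially fast: there exist constants C ≥ 0 and γ > 0 such that ‖exp(tL) − P‖ ≤ C e^{−γ t} for all t ≥ 0 (in the operator norm on linear endomorphisms of M_d(ℂ) induced by the Frobenius norm). -/
open Matrix Kronecker Filter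
open scoped ComplexOrder Topology

attribute [local instance] Matrix.frobeniusNormedAddCommGroup Matrix.frobeniusNormedSpace
attribute [-instance] instTopologicalSpaceMatrix Matrix.instUniformSpace

/-- The Choi matrix of a linear map on `d × d` complex matrices. -/
noncomputable def ChoiMatrix {d : ℕ}
    (E : Matrix (Fin d) (Fin d) ℂ →ₗ[ℂ] Matrix (Fin d) (Fin d) ℂ) :
    Matrix (Fin d × Fin d) (Fin d × Fin d) ℂ :=
  ∑ i : Fin d, ∑ j : Fin d,
    (E (Matrix.single i j 1)) ⊗ₖ (Matrix.single i j 1)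

/-- A quantum channel: completely positive (positive semidefinite Choi matrix)
and trace-preserving. -/
def IsQuantumChannel {d : ℕ}
    (E : Matrix (Fin d) (Fin d) ℂ →ₗ[ℂ] Matrix (Fin d) (Fin d) ℂ) : Prop :=
  (ChoiMatrix E).PosSemidef ∧ ∀ X, (E X).trace = X.trace

/-! A quantum channel is a positive trace-preserving map, and on positive semidefinite matrices the
trace dominates the Frobenius norm. Since these matrices span, the powers of `E` are bounded.
Power-boundedness confines the eigenvalues of `E` to the closed unit disk and makes the eigenvalue
`1` semisimple, so there is a projection `P` onto `ker L` along `range L`. The corrected generator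
`L - P` then has all its eigenvalues in the open left half-plane, hence generates an exponentially
decaying semigroup, and `exp (t L) - P = exp (t (L - P)) (1 - P)`. -/

section SpectralRadius

variable {A : Type*} [NormedRing A] [NormedAlgebra ℂ A] [CompleteSpace A]

lemma pow_isBigO_of_spectralRadius_lt {a : A} {r : NNReal} (h : spectralRadius ℂ a < r) :
    (fun n : ℕ => a ^ n) =O[atTop] fun n : ℕ => (r : ℝ) ^ n := by
  have gelfand := spectrum.pow_nnnorm_pow_one_div_tendsto_nhds_spectralRadius a
  refine Asymptotics.IsBigO.of_bound 1 ?_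
  filter_upwards [gelfand.eventually_lt_const h, eventually_gt_atTop 0] with n hn hn0
  have hpow : (‖a ^ n‖₊ : ENNReal) < (r : ENNReal) ^ n := by
    rwa [one_div, ENNReal.rpow_inv_lt_iff (by exact_mod_cast hn0), ENNReal.rpow_natCast] at hn
  rw [one_mul, Real.norm_of_nonneg (by positivity)]
  exact_mod_cast hpow.le

lemma exists_norm_exp_smul_le_of_spectralRadius_exp_lt_one {a : A}
    (h : spectralRadius ℂ (NormedSpace.exp a) < 1) :
    ∃ C : ℝ, 0 ≤ C ∧ ∃ γ : ℝ, 0 < γ ∧ ∀ t : ℝ, 0 ≤ t →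
      ‖NormedSpace.exp (t • a)‖ ≤ C * Real.exp (-γ * t) := by
  let _ : NormedAlgebra ℚ A := NormedAlgebra.restrictScalars ℚ ℂ A
  obtain ⟨r, har, hr1⟩ := ENNReal.lt_iff_exists_nnreal_btwn.1 h
  have hr0 : (0 : ℝ) < r := by exact_mod_cast pos_of_gt har
  replace hr1 : (r : ℝ) < 1 := by exact_mod_cast hr1
  obtain ⟨K, hK, hpow⟩ :=
    Asymptotics.bound_of_isBigO_nat_atTop (pow_isBigO_of_spectralRadius_lt har)
  have hcont : Continuous fun t : ℝ => NormedSpace.exp (t • a) :=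
    NormedSpace.exp_continuous.comp (continuous_id.smul continuous_const)
  obtain ⟨M, hM⟩ := isCompact_Icc.exists_bound_of_continuousOn (s := Set.Icc (0 : ℝ) 1)
    hcont.continuousOn
  have hM0 : 0 ≤ M := (norm_nonneg _).trans (hM 0 ⟨le_rfl, zero_le_one⟩)
  refine ⟨M * (K / r), by positivity, -Real.log r, neg_pos.2 (Real.log_neg hr0 hr1), ?_⟩
  intro t ht
  have hfloor : (⌊t⌋₊ : ℝ) ≤ t := Nat.floor_le ht
  have hlt : t < ⌊t⌋₊ + 1 := Nat.lt_floor_add_one t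
  have hsplit : NormedSpace.exp (t • a) =
      NormedSpace.exp ((t - ⌊t⌋₊) • a) * NormedSpace.exp a ^ ⌊t⌋₊ := by
    rw [← NormedSpace.exp_nsmul, ← Nat.cast_smul_eq_nsmul ℝ, ← NormedSpace.exp_add_of_commute
      (((Commute.refl a).smul_left _).smul_right _), ← add_smul, sub_add_cancel]
  have hrpow : (r : ℝ) ^ ⌊t⌋₊ ≤ Real.exp (Real.log r * t) / r := by
    rw [← Real.rpow_def_of_pos hr0, ← Real.rpow_sub_one hr0.ne', ← Real.rpow_natCast]
    exact Real.rpow_le_rpow_of_exponent_ge hr0 hr1.le (by linarith)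
  calc ‖NormedSpace.exp (t • a)‖
      ≤ ‖NormedSpace.exp ((t - ⌊t⌋₊) • a)‖ * ‖NormedSpace.exp a ^ ⌊t⌋₊‖ :=
        hsplit ▸ norm_mul_le _ _
    _ ≤ M * (K * (r : ℝ) ^ ⌊t⌋₊) := by
        gcongr
        · exact hM _ ⟨by linarith, by linarith⟩
        · simpa using hpow (pow_ne_zero ⌊t⌋₊ hr0.ne')
    _ ≤ M * (K * (Real.exp (Real.log r * t) / r)) := by gcongr
    _ = M * (K / r) * Real.exp (- -Real.log r * t) := by rw [neg_neg]; ring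

end SpectralRadius

section SpectralMapping

lemma exists_common_eigenvector {K V : Type*} [Field K] [IsAlgClosed K] [AddCommGroup V]
    [Module K V] [FiniteDimensional K V] {f g : Module.End K V} (hfg : Commute f g) {z : K}
    (hz : f.HasEigenvalue z) :
    ∃ (μ : K) (x : V), f.HasEigenvector z x ∧ g.HasEigenvector μ x := by
  have hmaps : ∀ x ∈ f.eigenspace z, g x ∈ f.eigenspace z :=
    fun _ hx => Module.End.mapsTo_genEigenspace_of_comm hfg z 1 hx
  have : Nontrivial (f.eigenspace z) := Submodule.nontrivial_iff_ne_bot.2 hz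
  obtain ⟨μ, hμ⟩ := Module.End.exists_eigenvalue (g.restrict hmaps)
  obtain ⟨x, hx⟩ := hμ.exists_hasEigenvector
  have hx0 : (x : V) ≠ 0 := fun h => hx.2 (Subtype.ext h)
  exact ⟨μ, x, ⟨x.2, hx0⟩,
    Module.End.mem_eigenspace_iff.2 (congrArg Subtype.val hx.apply_eq_smul), hx0⟩

lemma exp_apply_of_apply_eq_smul {𝕜 V : Type*} [RCLike 𝕜] [NormedAddCommGroup V]
    [NormedSpace 𝕜 V] [CompleteSpace V] {T : V →L[𝕜] V} {μ : 𝕜} {x : V} (h : T x = μ • x) :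
    NormedSpace.exp T x = NormedSpace.exp μ • x := by
  have hpow : ∀ n : ℕ, (T ^ n) x = μ ^ n • x := by
    intro n
    induction n with
    | zero => simp
    | succ k ih => rw [pow_succ', mul_apply_eq_comp, ih, map_smul, h, smul_smul, pow_succ]
  have hT := (ContinuousLinearMap.apply 𝕜 V x).hasSum
    (NormedSpace.exp_series_hasSum_exp' (𝕂 := 𝕜) T)
  have hμ := (NormedSpace.exp_series_hasSum_exp' (𝕂 := 𝕜) μ).smul_const x
  exact hT.unique (hμ.congr_fun fun n => by simp [hpow, smul_smul])

variable {V : Type*} [NormedAddCommGroup V] [NormedSpace ℂ V] [FiniteDimensional ℂ V]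

lemma mem_spectrum_iff_exists_apply_eq_smul {T : V →L[ℂ] V} {z : ℂ} :
    z ∈ spectrum ℂ T ↔ ∃ x, x ≠ 0 ∧ T x = z • x := by
  have : CompleteSpace V := FiniteDimensional.complete ℂ V
  rw [ContinuousLinearMap.spectrum_eq, ← Module.End.hasEigenvalue_iff_mem_spectrum]
  constructor
  · intro hz
    obtain ⟨x, hx⟩ := hz.exists_hasEigenvector
    exact ⟨x, hx.2, hx.apply_eq_smul⟩
  · rintro ⟨x, hx0, hx⟩
    exact Module.End.hasEigenvalue_of_hasEigenvector
      ⟨Module.End.mem_eigenspace_iff.2 hx, hx0⟩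

lemma spectrum_exp (T : V →L[ℂ] V) :
    spectrum ℂ (NormedSpace.exp T) = Complex.exp '' spectrum ℂ T := by
  have : CompleteSpace V := FiniteDimensional.complete ℂ V
  refine subset_antisymm (fun z hz => ?_) (Set.image_subset_iff.2 fun μ hμ => ?_)
  · have hcomm : Commute ((NormedSpace.exp T : V →L[ℂ] V) : Module.End ℂ V) T :=
      (Commute.refl T).exp_left.map ContinuousLinearMap.toLinearMapRingHom
    rw [ContinuousLinearMap.spectrum_eq] at hz
    obtain ⟨μ, x, hexp, hT⟩ :=
      exists_common_eigenvector hcomm (Module.End.HasEigenvalue.of_mem_spectrum hz)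
    have hTx : T x = μ • x := hT.apply_eq_smul
    refine ⟨μ, mem_spectrum_iff_exists_apply_eq_smul.2 ⟨x, hT.2, hTx⟩,
      smul_left_injective ℂ hT.2 ?_⟩
    have hTexp : NormedSpace.exp T x = z • x := hexp.apply_eq_smul
    rw [exp_apply_of_apply_eq_smul hTx, ← Complex.exp_eq_exp_ℂ] at hTexp
    exact hTexp
  · rw [Set.mem_preimage, Complex.exp_eq_exp_ℂ]
    exact spectrum.exp_mem_exp T hμ

lemma exists_norm_exp_smul_le_of_spectrum_re_neg {T : V →L[ℂ] V}
    (hT : ∀ μ ∈ spectrum ℂ T, μ.re < 0) :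
    ∃ C : ℝ, 0 ≤ C ∧ ∃ γ : ℝ, 0 < γ ∧ ∀ t : ℝ, 0 ≤ t →
      ‖NormedSpace.exp (t • T)‖ ≤ C * Real.exp (-γ * t) := by
  have : CompleteSpace V := FiniteDimensional.complete ℂ V
  refine exists_norm_exp_smul_le_of_spectralRadius_exp_lt_one (A := V →L[ℂ] V) ?_
  cases subsingleton_or_nontrivial (V →L[ℂ] V) with
  | inl _ => simp [spectralRadius]
  | inr _ =>
    refine spectrum.spectralRadius_lt_of_forall_lt _ fun z hz => ?_
    rw [spectrum_exp] at hz
    obtain ⟨μ, hμ, rfl⟩ := hz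
    rw [← NNReal.coe_lt_coe, coe_nnnorm, Complex.norm_exp]
    simpa using hT μ hμ

end SpectralMapping

section PowerBounded

/-- Power-boundedness of an element of a normed ring, here of an operator in the operator norm. -/
def IsPowerBounded {A : Type*} [SeminormedRing A] (a : A) : Prop :=
  ∃ K : ℝ, ∀ n : ℕ, ‖a ^ n‖ ≤ K

lemma IsPowerBounded.norm_le_one_of_mem_spectrum {𝕜 A : Type*} [NormedField 𝕜] [NormedRing A]
    [NormedAlgebra 𝕜 A] [CompleteSpace A] {a : A} (ha : IsPowerBounded a) {z : 𝕜}
    (hz : z ∈ spectrum 𝕜 a) : ‖z‖ ≤ 1 := by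
  obtain ⟨K, hK⟩ := ha
  by_contra! hz1
  obtain ⟨n, hn⟩ := pow_unbounded_of_one_lt (K * ‖(1 : A)‖) hz1
  refine hn.not_ge ?_
  calc ‖z‖ ^ n = ‖z ^ n‖ := (norm_pow z n).symm
    _ ≤ ‖a ^ n‖ * ‖(1 : A)‖ := spectrum.norm_le_norm_mul_of_mem (spectrum.pow_mem_pow a n hz)
    _ ≤ K * ‖(1 : A)‖ := by gcongr; exact hK n

lemma IsPowerBounded.disjoint_ker_range_sub_one {𝕜 V : Type*} [RCLike 𝕜]
    [NormedAddCommGroup V] [NormedSpace 𝕜 V] {E : V →L[𝕜] V} (hE : IsPowerBounded E) :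
    Disjoint (E - 1 : V →L[𝕜] V).ker (E - 1 : V →L[𝕜] V).range := by
  obtain ⟨K, hK⟩ := hE
  rw [Submodule.disjoint_def]
  rintro _ hker ⟨y, rfl⟩
  set z := (E - 1) y with hz
  have hEz : E z = z := sub_eq_zero.1 hker
  have hEy : E y = y + z := by simp [hz]
  have hpow : ∀ n : ℕ, (E ^ n) y = y + (n : 𝕜) • z := by
    intro n
    induction n with
    | zero => simp
    | succ k ih =>
      rw [pow_succ', mul_apply_eq_comp, ih, map_add, map_smul, hEy, hEz]
      push_cast
      module
  have hbound : ∀ n : ℕ, n • ‖z‖ ≤ K * ‖y‖ + ‖y‖ := fun n =>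
    calc n • ‖z‖ = ‖(E ^ n) y - y‖ := by simp [hpow, norm_smul]
      _ ≤ ‖(E ^ n) y‖ + ‖y‖ := norm_sub_le _ _
      _ ≤ K * ‖y‖ + ‖y‖ := by gcongr; exact (E ^ n).le_of_opNorm_le (hK n) y
  by_contra hz0
  obtain ⟨n, hn⟩ := exists_lt_nsmul (norm_pos_iff.2 hz0) (K * ‖y‖ + ‖y‖)
  exact hn.not_ge (hbound n)

lemma re_neg_of_norm_one_add_le_one {μ : ℂ} (hμ : ‖1 + μ‖ ≤ 1) (hμ0 : μ ≠ 0) : μ.re < 0 := by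
  have hsq : Complex.normSq (1 + μ) ≤ 1 := by
    rw [Complex.normSq_eq_norm_sq]
    exact pow_le_one₀ (norm_nonneg _) hμ
  have hpos : 0 < Complex.normSq μ := Complex.normSq_pos.2 hμ0
  rw [Complex.normSq_apply] at hsq hpos
  simp only [Complex.add_re, Complex.one_re, Complex.add_im, Complex.one_im] at hsq
  linarith

lemma exists_projection_onto_ker_along_range {𝕜 V : Type*} [NontriviallyNormedField 𝕜]
    [CompleteSpace 𝕜] [NormedAddCommGroup V] [NormedSpace 𝕜 V] [FiniteDimensional 𝕜 V]
    {L : V →L[𝕜] V} (hL : Disjoint L.ker L.range) :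
    ∃ P : V →L[𝕜] V, IsIdempotentElem P ∧ P * L = 0 ∧ L * P = 0 ∧ ∀ x, L x = 0 → P x = x := by
  have hcompl : IsCompl L.ker L.range := by
    refine (Submodule.isCompl_iff_disjoint _ _ ?_).2 hL
    rw [add_comm, LinearMap.finrank_range_add_finrank_ker]
  refine ⟨LinearMap.toContinuousLinearMap (L.ker.projection L.range hcompl), ?_, ?_, ?_, ?_⟩
  · exact (Submodule.isIdempotentElem_projection hcompl).map (Module.End.toContinuousLinearMap V)
  · exact ContinuousLinearMap.ext fun x =>
      (Submodule.projection_apply_eq_zero_iff hcompl).2 ⟨x, rfl⟩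
  · exact ContinuousLinearMap.ext (Submodule.projection_apply_mem hcompl)
  · exact fun x hx => Submodule.projection_apply_of_mem_left hcompl hx

-- Subtracting `P` moves the eigenvalue `0` of `E - 1` to `-1` and leaves the others in place.
lemma IsPowerBounded.re_neg_of_mem_spectrum_sub_projection {V : Type*} [NormedAddCommGroup V]
    [NormedSpace ℂ V] [FiniteDimensional ℂ V] {E P : V →L[ℂ] V} (hE : IsPowerBounded E)
    (hP : IsIdempotentElem P) (hPL : P * (E - 1) = 0) (hker : ∀ x, (E - 1) x = 0 → P x = x)
    {μ : ℂ} (hμ : μ ∈ spectrum ℂ (E - 1 - P)) : μ.re < 0 := by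
  have : CompleteSpace V := FiniteDimensional.complete ℂ V
  obtain ⟨x, hx0, hx⟩ := mem_spectrum_iff_exists_apply_eq_smul.1 hμ
  have hPx : -P x = μ • P x :=
    calc -P x = (P * (E - 1 - P)) x := by rw [mul_sub, hPL, hP.eq, zero_sub]; rfl
      _ = μ • P x := by rw [mul_apply_eq_comp, hx, map_smul]
  by_cases hPx0 : P x = 0
  · have hLx : (E - 1) x = μ • x := by simpa [hPx0] using hx
    have hEx : E x = (1 + μ) • x := by
      rw [add_smul, one_smul, ← hLx]
      simp
    refine re_neg_of_norm_one_add_le_one (hE.norm_le_one_of_mem_spectrum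
      (mem_spectrum_iff_exists_apply_eq_smul.2 ⟨x, hx0, hEx⟩)) ?_
    rintro rfl
    exact hx0 ((hker x (by rw [hLx, zero_smul])).symm.trans hPx0)
  · have hμ1 : -1 = μ := smul_left_injective ℂ hPx0 (by simpa using hPx)
    simp [← hμ1]

end PowerBounded

section Semigroup

lemma exp_mul_eq_self_of_mul_eq_zero {A : Type*} [NormedRing A] [NormedAlgebra ℚ A]
    [CompleteSpace A] {x y : A} (h : x * y = 0) : NormedSpace.exp x * y = y := by
  have hsemi : SemiconjBy y 0 x := by rw [SemiconjBy, mul_zero, h]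
  simpa using hsemi.exp_right.eq.symm

lemma exp_smul_sub_eq_exp_smul_sub_mul {A : Type*} [NormedRing A] [NormedAlgebra ℝ A]
    [CompleteSpace A] {L P : A} (hP : IsIdempotentElem P) (hPL : P * L = 0) (hLP : L * P = 0)
    (t : ℝ) : NormedSpace.exp (t • L) - P = NormedSpace.exp (t • (L - P)) * (1 - P) := by
  let _ : NormedAlgebra ℚ A := NormedAlgebra.restrictScalars ℚ ℝ A
  have hL : NormedSpace.exp (t • L) * P = P :=
    exp_mul_eq_self_of_mul_eq_zero (by rw [smul_mul_assoc, hLP, smul_zero])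
  have hPcompl : NormedSpace.exp (t • P) * (1 - P) = 1 - P :=
    exp_mul_eq_self_of_mul_eq_zero (by rw [smul_mul_assoc, hP.mul_one_sub_self, smul_zero])
  have hcomm : Commute (L - P) P := by
    rw [Commute, SemiconjBy, sub_mul, mul_sub, hLP, hPL]
  calc NormedSpace.exp (t • L) - P
      = NormedSpace.exp (t • L) * (1 - P) := by rw [mul_sub, mul_one, hL]
    _ = NormedSpace.exp (t • (L - P)) * (NormedSpace.exp (t • P) * (1 - P)) := by
        rw [← mul_assoc, ← NormedSpace.exp_add_of_commute ((hcomm.smul_left t).smul_right t),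
          ← smul_add, sub_add_cancel]
    _ = NormedSpace.exp (t • (L - P)) * (1 - P) := by rw [hPcompl]

lemma tendsto_of_norm_sub_le_mul_exp {V : Type*} [SeminormedAddCommGroup V] {f : ℝ → V} {a : V}
    {C γ : ℝ} (hγ : 0 < γ) (h : ∀ t, 0 ≤ t → ‖f t - a‖ ≤ C * Real.exp (-γ * t)) :
    Tendsto f atTop (𝓝 a) := by
  have hlin : Tendsto (fun t : ℝ => -γ * t) atTop atBot :=
    tendsto_id.const_mul_atTop_of_neg (neg_lt_zero.2 hγ)
  have hdecay : Tendsto (fun t => C * Real.exp (-γ * t)) atTop (𝓝 0) := by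
    simpa using (Real.tendsto_exp_atBot.comp hlin).const_mul C
  exact tendsto_iff_norm_sub_tendsto_zero.2 <| squeeze_zero'
    (Eventually.of_forall fun t => norm_nonneg _) ((eventually_ge_atTop 0).mono h) hdecay

theorem semigroup_converges_to_projector_general {V : Type*} [NormedAddCommGroup V]
    [NormedSpace ℂ V] [FiniteDimensional ℂ V] {E : V →L[ℂ] V} (hE : IsPowerBounded E)
    {L : V →L[ℂ] V} (hL : L = E - 1) :
    ∃ P : V →L[ℂ] V,
      Tendsto (fun t : ℝ => NormedSpace.exp (t • L)) atTop (𝓝 P) ∧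
      P ∘L P = P ∧ P ∘L L = 0 ∧ L ∘L P = 0 ∧
      ∃ C : ℝ, 0 ≤ C ∧ ∃ γ : ℝ, 0 < γ ∧ ∀ t : ℝ, 0 ≤ t →
        ‖NormedSpace.exp (t • L) - P‖ ≤ C * Real.exp (-γ * t) := by
  subst hL
  have : CompleteSpace V := FiniteDimensional.complete ℂ V
  obtain ⟨P, hP, hPL, hLP, hker⟩ :=
    exists_projection_onto_ker_along_range hE.disjoint_ker_range_sub_one
  obtain ⟨C, hC, γ, hγ, hdecay⟩ := exists_norm_exp_smul_le_of_spectrum_re_neg fun _ hμ =>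
    hE.re_neg_of_mem_spectrum_sub_projection hP hPL hker hμ
  have hbound : ∀ t : ℝ, 0 ≤ t →
      ‖NormedSpace.exp (t • (E - 1)) - P‖ ≤ C * ‖1 - P‖ * Real.exp (-γ * t) := fun t ht =>
    calc ‖NormedSpace.exp (t • (E - 1)) - P‖
        ≤ ‖NormedSpace.exp (t • (E - 1 - P))‖ * ‖1 - P‖ :=
          exp_smul_sub_eq_exp_smul_sub_mul hP hPL hLP t ▸ norm_mul_le _ _
      _ ≤ C * Real.exp (-γ * t) * ‖1 - P‖ := by gcongr; exact hdecay t ht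
      _ = C * ‖1 - P‖ * Real.exp (-γ * t) := by ring
  exact ⟨P, tendsto_of_norm_sub_le_mul_exp hγ hbound, hP, hPL, hLP,
    C * ‖1 - P‖, by positivity, γ, hγ, hbound⟩

end Semigroup

section QuantumChannel

lemma choiMatrix_apply {d : ℕ} (E : Matrix (Fin d) (Fin d) ℂ →ₗ[ℂ] Matrix (Fin d) (Fin d) ℂ)
    (a b : Fin d × Fin d) : ChoiMatrix E a b = E (single a.2 b.2 1) a.1 b.1 := by
  simp [ChoiMatrix, Matrix.sum_apply, kroneckerMap_apply, single_apply, ite_and]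

-- The factor `B` is `1 ⊗ star w`, regarded as a map from the first tensor factor.
lemma exists_map_vecMulVec_star_eq_conjTranspose_mul_choiMatrix_mul {d : ℕ}
    (E : Matrix (Fin d) (Fin d) ℂ →ₗ[ℂ] Matrix (Fin d) (Fin d) ℂ) (w : Fin d → ℂ) :
    ∃ B : Matrix (Fin d × Fin d) (Fin d) ℂ,
      E (vecMulVec w (star w)) = Bᴴ * ChoiMatrix E * B := by
  have hw : vecMulVec w (star w) = ∑ i, ∑ j, (w i * star (w j)) • single i j (1 : ℂ) := by
    conv_lhs => rw [matrix_eq_sum_single (vecMulVec w (star w))]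
    simp [vecMulVec_apply, smul_single]
  refine ⟨of fun a r => if a.1 = r then star (w a.2) else 0, ?_⟩
  ext r s
  calc E (vecMulVec w (star w)) r s
      = ∑ i, ∑ j, w i * star (w j) * E (single i j 1) r s := by
        simp only [hw, map_sum, map_smul, Matrix.sum_apply, Matrix.smul_apply, smul_eq_mul]
    _ = ∑ j, ∑ i, w i * E (single i j 1) r s * star (w j) := by
        rw [Finset.sum_comm]
        simp only [mul_right_comm]
    _ = _ := by
        simp [Matrix.mul_apply, Fintype.sum_prod_type, choiMatrix_apply, apply_ite,
          Finset.sum_ite_irrel, Finset.sum_mul]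

lemma map_posSemidef_of_choiMatrix_posSemidef {d : ℕ}
    {E : Matrix (Fin d) (Fin d) ℂ →ₗ[ℂ] Matrix (Fin d) (Fin d) ℂ}
    (hE : (ChoiMatrix E).PosSemidef) {X : Matrix (Fin d) (Fin d) ℂ} (hX : X.PosSemidef) :
    (E X).PosSemidef := by
  obtain ⟨m, v, rfl⟩ := posSemidef_iff_eq_sum_vecMulVec.1 hX
  rw [map_sum]
  refine posSemidef_sum _ fun k _ => ?_
  obtain ⟨B, hB⟩ := exists_map_vecMulVec_star_eq_conjTranspose_mul_choiMatrix_mul E (v k)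
  rw [hB]
  exact hE.conjTranspose_mul_mul_same B

lemma frobenius_norm_vecMulVec_le {𝕜 m n : Type*} [RCLike 𝕜] [Fintype m] [Fintype n]
    (v : m → 𝕜) (w : n → 𝕜) :
    ‖vecMulVec v w‖ ≤ ‖WithLp.toLp 2 v‖ * ‖WithLp.toLp 2 w‖ := by
  rw [vecMulVec_eq Unit, ← frobenius_norm_replicateCol (ι := Unit),
    ← frobenius_norm_replicateRow (ι := Unit)]
  exact frobenius_norm_mul _ _

lemma frobenius_norm_le_norm_trace {𝕜 n : Type*} [RCLike 𝕜] [Fintype n] {X : Matrix n n 𝕜}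
    (hX : X.PosSemidef) : ‖X‖ ≤ ‖X.trace‖ := by
  obtain ⟨m, v, rfl⟩ := posSemidef_iff_eq_sum_vecMulVec.1 hX
  have htrace : (∑ k, vecMulVec (v k) (star (v k))).trace
      = ((∑ k, ‖WithLp.toLp 2 (v k)‖ ^ 2 : ℝ) : 𝕜) := by
    push_cast
    simp_rw [trace_sum, trace_vecMulVec, ← inner_self_eq_norm_sq_to_K (𝕜 := 𝕜),
      EuclideanSpace.inner_toLp_toLp]
  have hstar (w : n → 𝕜) : ‖WithLp.toLp 2 (star w)‖ = ‖WithLp.toLp 2 w‖ := by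
    simp [EuclideanSpace.norm_eq]
  rw [htrace, RCLike.norm_ofReal, abs_of_nonneg (by positivity)]
  refine norm_sum_le_of_le _ fun k _ => (frobenius_norm_vecMulVec_le _ _).trans_eq ?_
  rw [hstar, sq]

lemma span_posSemidef_eq_top {n : Type*} [Finite n] :
    Submodule.span ℂ {X : Matrix n n ℂ | X.PosSemidef} = ⊤ := by
  classical
  have := Fintype.ofFinite n
  let _ := instTopologicalSpaceMatrix (m := n) (n := n) (R := ℂ)
  open scoped MatrixOrder in
  simpa only [nonneg_iff_posSemidef] using CStarAlgebra.span_nonneg (A := Matrix n n ℂ)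

lemma exists_norm_le_of_span_eq_top {𝕜 V W ι : Type*} [NontriviallyNormedField 𝕜]
    [SeminormedAddCommGroup V] [NormedSpace 𝕜 V] [CompleteSpace V] [SeminormedAddCommGroup W]
    [NormedSpace 𝕜 W] {T : ι → V →L[𝕜] W} {s : Set V} (hs : Submodule.span 𝕜 s = ⊤)
    (hT : ∀ x ∈ s, ∃ C, ∀ i, ‖T i x‖ ≤ C) : ∃ K, ∀ i, ‖T i‖ ≤ K := by
  refine banach_steinhaus fun x => ?_
  have hx : x ∈ Submodule.span 𝕜 s := hs ▸ Submodule.mem_top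
  induction hx using Submodule.span_induction with
  | mem x hx => exact hT x hx
  | zero => exact ⟨0, fun i => by simp⟩
  | add x y _ _ ihx ihy =>
    obtain ⟨C, hC⟩ := ihx
    obtain ⟨D, hD⟩ := ihy
    exact ⟨C + D, fun i => by simpa only [map_add] using norm_add_le_of_le (hC i) (hD i)⟩
  | smul c x _ ih =>
    obtain ⟨C, hC⟩ := ih
    refine ⟨‖c‖ * C, fun i => ?_⟩
    rw [map_smul, norm_smul]
    exact mul_le_mul_of_nonneg_left (hC i) (norm_nonneg c)

lemma isPowerBounded_of_map_posSemidef_of_trace_map {n : Type*} [Fintype n]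
    {E : Matrix n n ℂ →L[ℂ] Matrix n n ℂ} (hpos : ∀ X, X.PosSemidef → (E X).PosSemidef)
    (htrace : ∀ X, (E X).trace = X.trace) : IsPowerBounded E := by
  have : CompleteSpace (Matrix n n ℂ) := FiniteDimensional.complete ℂ _
  refine exists_norm_le_of_span_eq_top span_posSemidef_eq_top fun X hX => ⟨‖X.trace‖, fun k => ?_⟩
  have hiter : ((E ^ k) X).PosSemidef ∧ ((E ^ k) X).trace = X.trace := by
    induction k with
    | zero => exact ⟨hX, rfl⟩
    | succ k ih =>
      rw [pow_succ', mul_apply_eq_comp]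
      exact ⟨hpos _ ih.1, (htrace _).trans ih.2⟩
  exact hiter.2 ▸ frobenius_norm_le_norm_trace hiter.1

lemma IsQuantumChannel.isPowerBounded {d : ℕ}
    {E : Matrix (Fin d) (Fin d) ℂ →ₗ[ℂ] Matrix (Fin d) (Fin d) ℂ} (hE : IsQuantumChannel E) :
    IsPowerBounded (LinearMap.toContinuousLinearMap E) :=
  isPowerBounded_of_map_posSemidef_of_trace_map
    (fun _ hX => map_posSemidef_of_choiMatrix_posSemidef hE.1 hX) hE.2

end QuantumChannel

/-- for a quantum channel `E` and `L = E - id`, the semigroup `exp (t L)`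
converges as `t → ∞` to an idempotent `P` with `P ∘ L = L ∘ P = 0`, and the convergence
is exponentially fast in the operator norm induced by the Frobenius norm. -/
theorem semigroup_converges_to_projector {d : ℕ}
    (E : Matrix (Fin d) (Fin d) ℂ →ₗ[ℂ] Matrix (Fin d) (Fin d) ℂ)
    (hE : IsQuantumChannel E)
    (L : Matrix (Fin d) (Fin d) ℂ →L[ℂ] Matrix (Fin d) (Fin d) ℂ)
    (hL : L = LinearMap.toContinuousLinearMap (E - LinearMap.id)) :
    ∃ P : Matrix (Fin d) (Fin d) ℂ →L[ℂ] Matrix (Fin d) (Fin d) ℂ,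
      Tendsto (fun t : ℝ => NormedSpace.exp (t • L)) atTop (𝓝 P) ∧
      P ∘L P = P ∧ P ∘L L = 0 ∧ L ∘L P = 0 ∧
      ∃ C : ℝ, 0 ≤ C ∧ ∃ γ : ℝ, 0 < γ ∧ ∀ t : ℝ, 0 ≤ t →
        ‖NormedSpace.exp (t • L) - P‖ ≤ C * Real.exp (-γ * t) :=
  semigroup_converges_to_projector_general hE.isPowerBounded (hL.trans rfl)
end

section
/- For every quantum channel E on M_d(ℂ), the eigenvalue 1 of E is semisimple: ker((E − id) ∘ (E − id)) = ker(E − id); i.e., every X ∈ M_d(ℂ) with (E − id)((E − id)(X)) = 0 already satisfies E(X) = X. -/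
open Matrix Kronecker
open scoped ComplexOrder

/-!
A positive map `E` not increasing the trace of positive semidefinite matrices has bounded orbits:
`‖Eⁿ P‖ ≤ tr (Eⁿ P) ≤ tr P` for `P` positive semidefinite, and such matrices span. A Jordan block at
an eigenvalue `μ` of modulus one would instead produce an orbit growing linearly, since
`μ • Eⁿ X = μⁿ • (μ • X + n • Y)` whenever `Y = E X - μ • X` satisfies `E Y = μ • Y`.

A channel is positive by the Schur product theorem: the entries of `E X` are the sums over the
blocks of the Hadamard product of the Choi matrix with a matrix all of whose blocks are `X`.
-/

section BoundedOrbits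

theorem smul_pow_apply_of_apply_sub_smul {R M : Type*} [CommRing R] [AddCommGroup M] [Module R M]
    {f : Module.End R M} {μ : R} {x : M} (h : f (f x - μ • x) = μ • (f x - μ • x)) (n : ℕ) :
    μ • (f ^ n) x = μ ^ n • (μ • x + n • (f x - μ • x)) := by
  induction n with
  | zero => simp
  | succ n ih =>
    calc μ • (f ^ (n + 1)) x = f (μ • (f ^ n) x) := by
          rw [pow_succ', Module.End.mul_apply, map_smul]
      _ = μ ^ n • (μ • f x + n • μ • (f x - μ • x)) := by
          rw [ih, map_smul, map_add, map_smul, map_nsmul, h]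
      _ = μ ^ (n + 1) • (μ • x + (n + 1) • (f x - μ • x)) := by
          module

/-- The subspace of vectors whose forward orbit under `f` is norm-bounded. -/
def boundedOrbits {𝕜 V : Type*} [NormedField 𝕜] [SeminormedAddCommGroup V] [NormedSpace 𝕜 V]
    (f : Module.End 𝕜 V) : Submodule 𝕜 V where
  carrier := {x | ∃ C : ℝ, ∀ n : ℕ, ‖(f ^ n) x‖ ≤ C}
  zero_mem' := ⟨0, by simp⟩
  add_mem' := by
    rintro x y ⟨C, hC⟩ ⟨D, hD⟩
    refine ⟨C + D, fun n => ?_⟩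
    rw [map_add]
    exact norm_add_le_of_le (hC n) (hD n)
  smul_mem' := by
    rintro c x ⟨C, hC⟩
    refine ⟨‖c‖ * C, fun n => ?_⟩
    rw [map_smul, norm_smul]
    gcongr
    exact hC n

variable {𝕜 V : Type*} [RCLike 𝕜] [NormedAddCommGroup V] [NormedSpace 𝕜 V]

theorem apply_eq_smul_of_mem_boundedOrbits {f : Module.End 𝕜 V} {μ : 𝕜} (hμ : ‖μ‖ = 1) {x : V}
    (hx : x ∈ boundedOrbits f) (h : f (f x - μ • x) = μ • (f x - μ • x)) : f x = μ • x := by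
  obtain ⟨C, hC⟩ := hx
  set y := f x - μ • x
  have norm_pow_apply (n : ℕ) : ‖(f ^ n) x‖ = ‖μ • x + n • y‖ := by
    simpa only [norm_smul, norm_pow, hμ, one_pow, one_mul] using
      congrArg norm (smul_pow_apply_of_apply_sub_smul h n)
  have linear_growth (n : ℕ) : n • ‖y‖ ≤ C + ‖x‖ :=
    calc n • ‖y‖ = ‖n • y‖ := (RCLike.norm_nsmul 𝕜 n y).symm
      _ ≤ ‖μ • x + n • y‖ + ‖μ • x‖ := by
          simpa using norm_sub_le (μ • x + n • y) (μ • x)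
      _ = ‖(f ^ n) x‖ + ‖x‖ := by rw [norm_pow_apply, norm_smul, hμ, one_mul]
      _ ≤ C + ‖x‖ := by gcongr; exact hC n
  by_contra hne
  obtain ⟨n, hn⟩ := exists_lt_nsmul (norm_pos_iff.mpr (sub_ne_zero.mpr hne)) (C + ‖x‖)
  exact (linear_growth n).not_gt hn

theorem ker_sub_smul_id_comp_self_of_boundedOrbits_eq_top {f : Module.End 𝕜 V}
    (hf : boundedOrbits f = ⊤) {μ : 𝕜} (hμ : ‖μ‖ = 1) :
    LinearMap.ker ((f - μ • LinearMap.id) ∘ₗ (f - μ • LinearMap.id)) =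
      LinearMap.ker (f - μ • LinearMap.id) := by
  refine le_antisymm (fun x hx => ?_) (LinearMap.ker_le_ker_comp _ _)
  simp only [LinearMap.mem_ker, LinearMap.comp_apply, LinearMap.sub_apply, LinearMap.smul_apply,
    LinearMap.id_apply, sub_eq_zero] at hx ⊢
  exact apply_eq_smul_of_mem_boundedOrbits hμ (hf ▸ Submodule.mem_top) hx

end BoundedOrbits

section TraceNonincreasing

open scoped MatrixOrder Matrix.Norms.L2Operator

variable {n : Type*} [Fintype n] [DecidableEq n]

theorem l2_opNorm_le_re_trace_of_posSemidef {A : Matrix n n ℂ} (hA : A.PosSemidef) :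
    ‖A‖ ≤ A.trace.re := by
  have re_trace : A.trace.re = ∑ i, hA.1.eigenvalues i := by
    simp [hA.1.trace_eq_sum_eigenvalues]
  rw [re_trace, CStarAlgebra.norm_le_iff_le_algebraMap A
    (Finset.sum_nonneg fun i _ => hA.eigenvalues_nonneg i) hA.nonneg]
  refine le_algebraMap_of_spectrum_le (fun r hr => ?_) hA.1.isSelfAdjoint
  obtain ⟨i, rfl⟩ := hA.1.spectrum_real_eq_range_eigenvalues ▸ hr
  exact Finset.single_le_sum (fun j _ => hA.eigenvalues_nonneg j) (Finset.mem_univ i)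

theorem boundedOrbits_eq_top_of_trace_le {E : Matrix n n ℂ →ₗ[ℂ] Matrix n n ℂ}
    (hpos : ∀ X, X.PosSemidef → (E X).PosSemidef)
    (htr : ∀ X, X.PosSemidef → (E X).trace ≤ X.trace) : boundedOrbits E = ⊤ := by
  rw [eq_top_iff, ← CStarAlgebra.span_nonneg, Submodule.span_le]
  intro P hP
  have iterate (k : ℕ) : ((E ^ k) P).PosSemidef ∧ ((E ^ k) P).trace ≤ P.trace := by
    induction k with
    | zero => exact ⟨hP.posSemidef, le_rfl⟩
    | succ k ih =>
      rw [pow_succ', Module.End.mul_apply]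
      exact ⟨hpos _ ih.1, (htr _ ih.1).trans ih.2⟩
  exact ⟨P.trace.re, fun k => (l2_opNorm_le_re_trace_of_posSemidef (iterate k).1).trans
    (Complex.re_le_re (iterate k).2)⟩

end TraceNonincreasing

section Choi

theorem posSemidef_blockSums {m n R : Type*} [Finite m] [Fintype n] [Ring R] [PartialOrder R]
    [StarRing R] {M : Matrix (m × n) (m × n) R} (hM : M.PosSemidef) :
    (Matrix.of fun a b => ∑ i, ∑ j, M (a, i) (b, j)).PosSemidef := by
  classical
  have := Fintype.ofFinite m
  let V : Matrix (m × n) m R := (1 : Matrix m m R).submatrix Prod.fst id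
  convert hM.conjTranspose_mul_mul_same V using 1
  ext a b
  rw [Matrix.of_apply, Finset.sum_comm]
  simp [V, Matrix.mul_apply, Matrix.one_apply, Fintype.sum_prod_type_right]

variable {d : ℕ} (E : Matrix (Fin d) (Fin d) ℂ →ₗ[ℂ] Matrix (Fin d) (Fin d) ℂ)

theorem choiMatrix_apply_s3 (a i b j : Fin d) :
    ChoiMatrix E (a, i) (b, j) = E (Matrix.single i j 1) a b := by
  simp [ChoiMatrix, Matrix.sum_apply, Matrix.single_apply, ite_and]

theorem apply_eq_sum_choiMatrix_mul (X : Matrix (Fin d) (Fin d) ℂ) (a b : Fin d) :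
    E X a b = ∑ i, ∑ j, ChoiMatrix E (a, i) (b, j) * X i j := by
  have single_eq_smul (i j : Fin d) :
      Matrix.single i j (X i j) = X i j • Matrix.single i j (1 : ℂ) := by
    simp [Matrix.smul_single]
  conv_lhs => rw [Matrix.matrix_eq_sum_single X]
  simp only [single_eq_smul, map_sum, map_smul, Matrix.sum_apply, Matrix.smul_apply, smul_eq_mul,
    choiMatrix_apply_s3, mul_comm]

variable {E}

theorem posSemidef_apply_of_posSemidef_choiMatrix (hE : (ChoiMatrix E).PosSemidef)
    {X : Matrix (Fin d) (Fin d) ℂ} (hX : X.PosSemidef) : (E X).PosSemidef := by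
  have apply_eq_blockSums : E X = Matrix.of fun a b => ∑ i, ∑ j,
      (ChoiMatrix E ⊙ X.submatrix Prod.snd Prod.snd) (a, i) (b, j) :=
    Matrix.ext fun a b => apply_eq_sum_choiMatrix_mul E X a b
  rw [apply_eq_blockSums]
  exact posSemidef_blockSums (hE.hadamard (hX.submatrix Prod.snd))

end Choi

theorem channel_fixed_point_semisimple_general {n : Type*} [Fintype n]
    (E : Matrix n n ℂ →ₗ[ℂ] Matrix n n ℂ)
    (hpos : ∀ X, X.PosSemidef → (E X).PosSemidef)
    (htr : ∀ X, X.PosSemidef → (E X).trace ≤ X.trace) {μ : ℂ} (hμ : ‖μ‖ = 1) :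
    LinearMap.ker ((E - μ • LinearMap.id) ∘ₗ (E - μ • LinearMap.id)) =
      LinearMap.ker (E - μ • LinearMap.id) := by
  classical
  open scoped Matrix.Norms.L2Operator in
  exact ker_sub_smul_id_comp_self_of_boundedOrbits_eq_top
    (boundedOrbits_eq_top_of_trace_le hpos htr) hμ

/-- the eigenvalue 1 of a quantum channel is semisimple:
`ker((E - id) ∘ (E - id)) = ker (E - id)`. -/
theorem channel_fixed_point_semisimple {d : ℕ}
    (E : Matrix (Fin d) (Fin d) ℂ →ₗ[ℂ] Matrix (Fin d) (Fin d) ℂ)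
    (hE : IsQuantumChannel E) :
    LinearMap.ker ((E - LinearMap.id) ∘ₗ (E - LinearMap.id)) =
      LinearMap.ker (E - LinearMap.id) := by
  simpa using channel_fixed_point_semisimple_general E
    (fun _ => posSemidef_apply_of_posSemidef_choiMatrix hE.1) (fun X _ => (hE.2 X).le) norm_one
end
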